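/- Let G be a subgroup of U(2^N) with U_{N,G} = {e^{iθ} I : θ ∈ ℝ} (only scalar unitaries are G-symmetric). If and only if this holds is the G-symmetric Clifford group C_{N,G} a G-symmetric unitary 4-design. In particular, if C_{N,G} is a G-symmetric unitary 4-design, then every unitary commuting with all of G is a scalar multiple of the identity. -/

import Mathlib

open Matrix MeasureTheory

/-- Basis index for `N` qubits. -/
abbrev QubitIdx (N : ℕ) := Fin N → Fin 2

/-- Linear operators on the Hilbert space `(ℂ²)^⊗N`, as matrices. -/
abbrev Op (N : ℕ) := Matrix (QubitIdx N) (QubitIdx N) ℂ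

/-- The single-qubit Pauli matrices I, X, Y, Z. -/
noncomputable def σ1 : Fin 4 → Matrix (Fin 2) (Fin 2) ℂ
  | 0 => 1
  | 1 => !![0, 1; 1, 0]
  | 2 => !![0, -Complex.I; Complex.I, 0]
  | 3 => !![1, 0; 0, -1]

/-- The unsigned Pauli operator on `N` qubits indexed by `a : Fin N → Fin 4`
(the Kronecker product of the single-qubit Paulis `σ1 (a k)`). -/
noncomputable def pauli {N : ℕ} (a : Fin N → Fin 4) : Op N :=
  Matrix.of fun i j => ∏ k, σ1 (a k) (i k) (j k)

/-- The phase factors `{±1, ±i}`. -/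
def phases : Set ℂ := {1, -1, Complex.I, -Complex.I}

/-- The Pauli group on `N` qubits: phased unsigned Paulis. -/
def PauliGroup (N : ℕ) : Set (Op N) :=
  {P | ∃ c ∈ phases, ∃ a : Fin N → Fin 4, P = c • pauli a}

/-- A Clifford operator: a unitary whose conjugation action preserves the Pauli group. -/
def IsClifford {N : ℕ} (U : Op N) : Prop :=
  U ∈ Matrix.unitaryGroup (QubitIdx N) ℂ ∧
    ∀ P ∈ PauliGroup N, U * P * Uᴴ ∈ PauliGroup N

/-- The `G`-symmetric unitary group `U_{N,G}`: unitaries commuting with every element of `G`. -/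
def UnitarySym (N : ℕ) (G : Set (Op N)) : Set (Op N) :=
  {U | U ∈ Matrix.unitaryGroup (QubitIdx N) ℂ ∧ ∀ g ∈ G, U * g = g * U}

/-- The `G`-symmetric Clifford group `C_{N,G}`. -/
def CliffordSym (N : ℕ) (G : Set (Op N)) : Set (Op N) :=
  {U | IsClifford U ∧ U ∈ UnitarySym N G}

/-- `G` is a subgroup of the unitary group on `N` qubits. -/
def IsUnitarySubgroup {N : ℕ} (G : Set (Op N)) : Prop :=
  (∀ g ∈ G, g ∈ Matrix.unitaryGroup (QubitIdx N) ℂ) ∧ (1 : Op N) ∈ G ∧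
    (∀ g ∈ G, ∀ h ∈ G, g * h ∈ G) ∧ (∀ g ∈ G, gᴴ ∈ G)

/-- Operators on the `t`-fold tensor power `H^⊗t` of the `N`-qubit Hilbert space. -/
abbrev BigOp (N t : ℕ) := Matrix (Fin t → QubitIdx N) (Fin t → QubitIdx N) ℂ

/-- The `t`-fold tensor (Kronecker) power `A^⊗t` of an operator `A`. -/
noncomputable def tpow {N : ℕ} (t : ℕ) (A : Op N) : BigOp N t :=
  Matrix.of fun i j => ∏ s, A (i s) (j s)

noncomputable instance OpMeasurableSpace {N : ℕ} : MeasurableSpace (Op N) := borel (Op N)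

/-- The `t`-fold twirling channel `Φ_{t,μ}(L) = ∫ U^⊗t L (U^⊗t)† dμ(U)`, defined entrywise. -/
noncomputable def twirl {N : ℕ} (t : ℕ) (μ : Measure (Op N)) (L : BigOp N t) : BigOp N t :=
  Matrix.of fun i j => ∫ U, (tpow t U * L * (tpow t U)ᴴ) i j ∂μ

/-- The Kronecker power `A^⊗N` of a single-qubit operator, as an operator on `N` qubits. -/
noncomputable def kronPow {N : ℕ} (A : Matrix (Fin 2) (Fin 2) ℂ) : Op N :=
  Matrix.of fun i j => ∏ k, A (i k) (j k)

/-- The single-qubit unitary `e^{iθZ}`. -/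
noncomputable def expZ (θ : ℝ) : Matrix (Fin 2) (Fin 2) ℂ :=
  !![Complex.exp ((θ : ℂ) * Complex.I), 0; 0, Complex.exp (-(θ : ℂ) * Complex.I)]

/-- The permutation operator `V_σ` on the threefold tensor power `H^⊗3`. -/
noncomputable def permOp {N : ℕ} (σ : Equiv.Perm (Fin 3)) : BigOp N 3 :=
  Matrix.of fun i j => if i = j ∘ ⇑σ⁻¹ then 1 else 0

/-- The tensor product `G₁ ⊗ G₂ ⊗ G₃` as an operator on `H^⊗3`. -/
noncomputable def tprod3 {N : ℕ} (G₁ G₂ G₃ : Op N) : BigOp N 3 :=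
  Matrix.of fun i j => G₁ (i 0) (j 0) * G₂ (i 1) (j 1) * G₃ (i 2) (j 2)

/-!
Let `L = ∑_P P^⊗4` be the sum over unsigned Pauli operators. A Clifford unitary permutes the Pauli
operators up to a phase with trivial fourth power, so `L` is its own twirl over the Clifford group;
for a 4-design it is then also its own twirl over the symmetric unitaries, and each of these fixes
`L` by left invariance. If a unitary fixes `L`, each row `x` of its Pauli transfer matrix satisfies
`∑ xᵢ² = ∑ xᵢ⁴ = 1`, which forces its entries into `{-1, 0, 1}`. The symmetric unitaries form the
unitary group of a finite-dimensional C⋆-algebra, which is connected: every spectrum is finite,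
hence some phase rotates a unitary to within distance `2` of the identity. So the diagonal of the
transfer matrix, being `1` at the identity, is `1` throughout. Every symmetric unitary therefore
commutes with all Pauli operators, and these span the matrix algebra.
-/

section UnitaryGroup

lemma circle_coe_mem_unitary (z : Circle) : (z : ℂ) ∈ unitary ℂ := by
  rw [Unitary.mem_iff_self_mul_star, Complex.star_def, Complex.mul_conj, Circle.normSq_coe,
    Complex.ofReal_one]

instance infinite_circle : Infinite Circle :=
  have : Nontrivial Circle :=
    ⟨1, Circle.exp Real.pi, fun h => by
      have hre := congrArg (fun z : Circle => (z : ℂ).re) h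
      norm_num [Circle.coe_exp] at hre⟩
  PreconnectedSpace.infinite

lemma finite_spectrum {K A : Type*} [Field K] [Ring A] [Algebra K A] [FiniteDimensional K A]
    (a : A) : (spectrum K a).Finite := by
  refine ((minpoly K a).rootSet_finite K).subset fun c hc => ?_
  rw [Polynomial.mem_rootSet_of_ne (minpoly.ne_zero_of_finite K a), Polynomial.coe_aeval_eq_eval]
  have h := spectrum.subset_polynomial_aeval a (minpoly K a) ⟨c, hc, rfl⟩
  rw [minpoly.aeval, spectrum.mem_iff, sub_zero] at h
  by_contra hne
  exact h ((IsUnit.mk0 _ hne).map _)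

variable {A : Type*} [CStarAlgebra A]

lemma exists_circle_norm_smul_sub_one_lt_two {u : A} (hu : u ∈ unitary A)
    (hfin : (spectrum ℂ u).Finite) : ∃ z : Circle, ‖(z : ℂ) • u - 1‖ < 2 := by
  by_contra! hfar
  have hspec : Set.range (fun z : Circle => -(z : ℂ)⁻¹) ⊆ spectrum ℂ u := by
    rintro _ ⟨z, rfl⟩
    have hneg : -1 ∈ spectrum ℂ ((z : ℂ) • u) := by
      have hzu := Unitary.smul_mem_of_mem (circle_coe_mem_unitary z) hu
      rw [← not_not (a := -1 ∈ _), ← Unitary.norm_sub_one_lt_two_iff hzu]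
      exact (hfar z).not_gt
    rw [← spectrum.smul_mem_smul_iff (r := Units.mk0 (z : ℂ) z.coe_ne_zero)]
    simpa [Units.smul_def] using hneg
  have hinj : Function.Injective fun z : Circle => -(z : ℂ)⁻¹ :=
    neg_injective.comp (inv_injective.comp Circle.coe_injective)
  exact Set.infinite_range_of_injective hinj (hfin.subset hspec)

instance pathConnectedSpace_unitary [FiniteDimensional ℂ A] :
    PathConnectedSpace (unitary A) := by
  suffices h : ∀ u : unitary A, Joined u 1 from ⟨⟨1⟩, fun u v => (h u).trans (h v).symm⟩
  intro u
  obtain ⟨z, hz⟩ := exists_circle_norm_smul_sub_one_lt_two u.2 (finite_spectrum (K := ℂ) (u : A))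
  let f : Circle → unitary A := fun w =>
    ⟨(w : ℂ) • (u : A), Unitary.smul_mem_of_mem (circle_coe_mem_unitary w) u.2⟩
  have hf : Continuous f := by fun_prop
  have hrot : Joined u (f z) := by
    simpa [f] using (PathConnectedSpace.joined (1 : Circle) z).map hf
  exact hrot.trans (Unitary.joined 1 (f z) hz).symm

end UnitaryGroup

section PiKronecker

/-- The Kronecker product `⨂ k, A k` of a finite family of matrices. -/
def piKronecker {ι R : Type*} [Fintype ι] [CommMonoid R] {m n : ι → Type*}
    (A : ∀ k, Matrix (m k) (n k) R) : Matrix (∀ k, m k) (∀ k, n k) R :=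
  Matrix.of fun i j => ∏ k, A k (i k) (j k)

variable {ι R : Type*} [Fintype ι] [CommSemiring R] {l m n : ι → Type*}

lemma piKronecker_mul [DecidableEq ι] [∀ k, Fintype (m k)] (A : ∀ k, Matrix (l k) (m k) R)
    (B : ∀ k, Matrix (m k) (n k) R) :
    piKronecker A * piKronecker B = piKronecker fun k => A k * B k := by
  ext i j
  simp only [piKronecker, Matrix.mul_apply, Matrix.of_apply, ← Finset.prod_mul_distrib]
  exact (Fintype.prod_sum fun k x => A k (i k) x * B k x (j k)).symm

lemma conjTranspose_piKronecker [StarRing R] (A : ∀ k, Matrix (m k) (n k) R) :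
    (piKronecker A)ᴴ = piKronecker fun k => (A k)ᴴ := by
  ext i j
  simp [piKronecker, Matrix.conjTranspose_apply]

lemma trace_piKronecker [DecidableEq ι] [∀ k, Fintype (n k)] (A : ∀ k, Matrix (n k) (n k) R) :
    (piKronecker A).trace = ∏ k, (A k).trace :=
  (Fintype.prod_sum fun k x => A k x x).symm

lemma piKronecker_one [∀ k, DecidableEq (n k)] :
    piKronecker (fun k => (1 : Matrix (n k) (n k) R)) = 1 := by
  ext i j
  simp [piKronecker, Matrix.one_apply, funext_iff, Finset.prod_ite_zero]

end PiKronecker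

section SingleQubit

lemma σ1_mul_self (a : Fin 4) : σ1 a * σ1 a = 1 := by
  fin_cases a <;> ext i j <;> fin_cases i <;> fin_cases j <;> simp [σ1]

lemma isHermitian_σ1 (a : Fin 4) : (σ1 a).IsHermitian := by
  fin_cases a <;> ext i j <;> fin_cases i <;> fin_cases j <;> simp [σ1]

lemma trace_σ1_mul_σ1 (a b : Fin 4) : (σ1 a * σ1 b).trace = if a = b then 2 else 0 := by
  fin_cases a <;> fin_cases b <;> simp [σ1, Matrix.trace] <;> norm_num

lemma sum_σ1_mul_σ1 (i j k l : Fin 2) :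
    ∑ a, σ1 a i j * σ1 a k l = if i = l ∧ j = k then 2 else 0 := by
  fin_cases i <;> fin_cases j <;> fin_cases k <;> fin_cases l <;>
    simp [σ1, Fin.sum_univ_four] <;> norm_num

end SingleQubit

section Pauli

variable {N : ℕ}

lemma pauli_eq_piKronecker (a : Fin N → Fin 4) : pauli a = piKronecker fun k => σ1 (a k) := rfl

lemma pauli_mul_self (a : Fin N → Fin 4) : pauli a * pauli a = 1 := by
  simp only [pauli_eq_piKronecker, piKronecker_mul, σ1_mul_self, piKronecker_one]

lemma isHermitian_pauli (a : Fin N → Fin 4) : (pauli a).IsHermitian := by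
  simp only [Matrix.IsHermitian, pauli_eq_piKronecker, conjTranspose_piKronecker,
    (isHermitian_σ1 _).eq]

lemma trace_pauli_mul_pauli (a b : Fin N → Fin 4) :
    (pauli a * pauli b).trace = if a = b then 2 ^ N else 0 := by
  simp [pauli_eq_piKronecker, piKronecker_mul, trace_piKronecker, trace_σ1_mul_σ1, funext_iff,
    Finset.prod_ite_zero]

lemma sum_pauli_mul_pauli (i j k l : QubitIdx N) :
    ∑ a, pauli a i j * pauli a k l = if i = l ∧ j = k then 2 ^ N else 0 := by
  simp only [pauli, Matrix.of_apply, ← Finset.prod_mul_distrib]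
  rw [← Fintype.prod_sum fun m b => σ1 b (i m) (j m) * σ1 b (k m) (l m)]
  simp [sum_σ1_mul_σ1, funext_iff, ← forall_and, Finset.prod_ite_zero]

lemma sum_trace_pauli_mul_smul_pauli (A : Op N) :
    ∑ a, (pauli a * A).trace • pauli a = (2 ^ N : ℂ) • A := by
  ext k l
  calc (∑ a, (pauli a * A).trace • pauli a) k l
      = ∑ a, ∑ i, ∑ j, A j i * (pauli a i j * pauli a k l) := by
        simp only [Matrix.sum_apply, Matrix.smul_apply, smul_eq_mul, Matrix.trace,
          Matrix.diag_apply, Matrix.mul_apply, Finset.sum_mul]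
        congr! 3
        ring
    _ = ∑ i, ∑ j, A j i * ∑ a, pauli a i j * pauli a k l := by
        simp only [Finset.mul_sum]
        rw [Finset.sum_comm]
        exact Finset.sum_congr rfl fun i _ => Finset.sum_comm
    _ = ((2 ^ N : ℂ) • A) k l := by
        simp [sum_pauli_mul_pauli, ite_and, mul_comm]

lemma sum_trace_pauli_mul_sq (A : Op N) :
    ∑ a, (pauli a * A).trace ^ 2 = 2 ^ N * (A * A).trace := by
  have h := congrArg (fun B => (B * A).trace) (sum_trace_pauli_mul_smul_pauli A)
  simpa [Finset.sum_mul, Matrix.trace_sum, sq] using h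

lemma commute_of_commute_pauli {A : Op N} (hA : ∀ a, Commute A (pauli a)) (B : Op N) :
    Commute A B := by
  have h : Commute A ((2 ^ N : ℂ) • B) := by
    rw [← sum_trace_pauli_mul_smul_pauli]
    exact Commute.sum_right _ _ _ fun a _ => (hA a).smul_right _
  simpa using h.smul_right (2 ^ N : ℂ)⁻¹

lemma exists_eq_smul_one_of_commute_pauli {A : Op N} (hA : ∀ a, Commute A (pauli a)) :
    ∃ c : ℂ, A = c • (1 : Op N) := by
  obtain ⟨c, hc⟩ := Matrix.mem_range_scalar_iff_commute_single'.2 fun i j =>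
    (commute_of_commute_pauli hA (Matrix.single i j 1)).symm
  exact ⟨c, by rw [← hc, Matrix.scalar_apply, Matrix.smul_one_eq_diagonal]⟩

lemma eq_of_smul_pauli_eq_smul_pauli {c d : ℂ} (hc : c ≠ 0) {a b : Fin N → Fin 4}
    (h : c • pauli a = d • pauli b) : a = b := by
  by_contra hne
  have htrace := congrArg (fun B => (pauli a * B).trace) h
  simp [trace_pauli_mul_pauli, hc, hne] at htrace

end Pauli

section TensorPower

variable {N : ℕ} (t : ℕ)

lemma tpow_eq_piKronecker (A : Op N) : tpow t A = piKronecker fun _ => A := rfl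

lemma tpow_mul (A B : Op N) : tpow t (A * B) = tpow t A * tpow t B := by
  simp only [tpow_eq_piKronecker, piKronecker_mul]

lemma conjTranspose_tpow (A : Op N) : (tpow t A)ᴴ = tpow t Aᴴ :=
  conjTranspose_piKronecker _

lemma trace_tpow (A : Op N) : (tpow t A).trace = A.trace ^ t := by
  simp [tpow_eq_piKronecker, trace_piKronecker]

lemma tpow_one : tpow t (1 : Op N) = 1 :=
  piKronecker_one

lemma tpow_smul (c : ℂ) (A : Op N) : tpow t (c • A) = c ^ t • tpow t A := by
  ext i j
  simp [tpow, Finset.prod_mul_distrib]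

lemma tpow_mem_unitaryGroup {U : Op N} (hU : U ∈ unitaryGroup (QubitIdx N) ℂ) :
    tpow t U ∈ unitaryGroup (Fin t → QubitIdx N) ℂ := by
  rw [mem_unitaryGroup_iff, star_eq_conjTranspose] at hU ⊢
  rw [conjTranspose_tpow, ← tpow_mul, hU, tpow_one]

@[fun_prop]
lemma continuous_tpow : Continuous fun U : Op N => tpow t U := by
  unfold tpow
  fun_prop

end TensorPower

section PauliFourthPower

variable {N : ℕ}

/-- The operator `L = ∑_P P^⊗4`, summed over the unsigned Pauli operators `P`. -/
noncomputable def pauliFourthPower (N : ℕ) : BigOp N 4 :=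
  ∑ a : Fin N → Fin 4, tpow 4 (pauli a)

lemma tpow_conj_pauliFourthPower (U : Op N) :
    tpow 4 U * pauliFourthPower N * (tpow 4 U)ᴴ = ∑ a, tpow 4 (U * pauli a * Uᴴ) := by
  simp only [pauliFourthPower, Finset.mul_sum, Finset.sum_mul, tpow_mul, conjTranspose_tpow]

lemma pow_four_eq_one_of_mem_phases {c : ℂ} (hc : c ∈ phases) : c ^ 4 = 1 := by
  rcases hc with rfl | rfl | rfl | rfl <;> norm_num [neg_pow, Complex.I_pow_four]

lemma IsClifford.exists_bijective_conj_pauli {U : Op N} (hU : IsClifford U) :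
    ∃ h : (Fin N → Fin 4) → (Fin N → Fin 4), h.Bijective ∧
      ∀ a, ∃ c ∈ phases, U * pauli a * Uᴴ = c • pauli (h a) := by
  have himage (a : Fin N → Fin 4) : ∃ b, ∃ c ∈ phases, U * pauli a * Uᴴ = c • pauli b := by
    obtain ⟨c, hc, b, hb⟩ := hU.2 (pauli a) ⟨1, by simp [phases], a, by simp⟩
    exact ⟨b, c, hc, hb⟩
  choose h c hc hconj using himage
  have hUU : Uᴴ * U = 1 := mem_unitaryGroup_iff'.1 hU.1
  have hc₀ (a : Fin N → Fin 4) : c a ≠ 0 := by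
    rintro ha
    simpa [ha] using pow_four_eq_one_of_mem_phases (hc a)
  have hpauli (a : Fin N → Fin 4) : pauli a = c a • (Uᴴ * pauli (h a) * U) := by
    rw [← smul_mul_assoc, ← mul_smul_comm, ← hconj]
    simp only [mul_assoc, hUU, mul_one]
    rw [← mul_assoc, hUU, one_mul]
  have hinj : Function.Injective h := fun a b hab => by
    refine eq_of_smul_pauli_eq_smul_pauli (hc₀ b) (d := c a) ?_
    rw [hpauli a, hpauli b, hab, smul_comm]
  exact ⟨h, Finite.injective_iff_bijective.1 hinj, fun a => ⟨c a, hc a, hconj a⟩⟩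

lemma IsClifford.tpow_conj_pauliFourthPower {U : Op N} (hU : IsClifford U) :
    tpow 4 U * pauliFourthPower N * (tpow 4 U)ᴴ = pauliFourthPower N := by
  obtain ⟨h, hbij, hconj⟩ := hU.exists_bijective_conj_pauli
  have hpow (a : Fin N → Fin 4) : tpow 4 (U * pauli a * Uᴴ) = tpow 4 (pauli (h a)) := by
    obtain ⟨c, hc, ha⟩ := hconj a
    rw [ha, tpow_smul, pow_four_eq_one_of_mem_phases hc, one_smul]
  rw [_root_.tpow_conj_pauliFourthPower]
  simp only [hpow]
  exact hbij.sum_comp fun b => tpow 4 (pauli b)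

end PauliFourthPower

section PauliTransfer

lemma mem_neg_one_zero_one_of_sum_sq_of_sum_pow_four {ι R : Type*} [Fintype ι] [CommRing R]
    [LinearOrder R] [IsStrictOrderedRing R] {x : ι → R} (h₂ : ∑ i, x i ^ 2 = 1)
    (h₄ : ∑ i, x i ^ 4 = 1) (i : ι) : x i ∈ ({-1, 0, 1} : Set R) := by
  have hle (j : ι) : x j ^ 2 ≤ 1 :=
    h₂ ▸ Finset.single_le_sum (f := fun j => x j ^ 2) (fun _ _ => sq_nonneg _) (Finset.mem_univ j)
  have hsum : ∑ j, x j ^ 2 * (1 - x j ^ 2) = 0 := by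
    rw [← sub_eq_zero.2 (h₂.trans h₄.symm), ← Finset.sum_sub_distrib]
    exact Finset.sum_congr rfl fun j _ => by ring
  have hzero := (Finset.sum_eq_zero_iff_of_nonneg fun j _ =>
    mul_nonneg (sq_nonneg (x j)) (sub_nonneg.2 (hle j))).1 hsum i (Finset.mem_univ i)
  rcases mul_eq_zero.1 hzero with h | h
  · simp [pow_eq_zero_iff two_ne_zero |>.1 h]
  · rcases sq_eq_one_iff.1 (sub_eq_zero.1 h).symm with h | h <;> simp [h]

lemma ofReal_re_trace_mul_of_isHermitian {n : Type*} [Fintype n] {A B : Matrix n n ℂ}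
    (hA : A.IsHermitian) (hB : B.IsHermitian) : (((A * B).trace.re : ℝ) : ℂ) = (A * B).trace := by
  rw [← Complex.conj_eq_iff_re, ← Complex.star_def, ← Matrix.trace_conjTranspose,
    Matrix.conjTranspose_mul, hA.eq, hB.eq, Matrix.trace_mul_comm]

variable {N : ℕ}

/-- The Pauli transfer matrix of `V`: the matrix of `A ↦ V A V†` in the basis of Pauli operators,
with entries `2⁻ᴺ tr (P_b V P_a V†)`. These traces are real, so nothing is lost by taking the
real part. -/
noncomputable def pauliTransfer (V : Op N) : Matrix (Fin N → Fin 4) (Fin N → Fin 4) ℝ :=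
  Matrix.of fun b a => (pauli b * (V * pauli a * Vᴴ)).trace.re / 2 ^ N

lemma ofReal_pauliTransfer (V : Op N) (a b : Fin N → Fin 4) :
    (pauliTransfer V b a : ℂ) = (pauli b * (V * pauli a * Vᴴ)).trace / 2 ^ N := by
  rw [← ofReal_re_trace_mul_of_isHermitian (isHermitian_pauli b)
    (isHermitian_mul_mul_conjTranspose V (isHermitian_pauli a))]
  simp [pauliTransfer]

@[fun_prop]
lemma continuous_pauliTransfer : Continuous (pauliTransfer : Op N → _) := by
  unfold pauliTransfer
  fun_prop

lemma pauliTransfer_one : pauliTransfer (1 : Op N) = 1 := by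
  ext b a
  apply Complex.ofReal_injective
  rw [ofReal_pauliTransfer]
  by_cases hab : b = a <;> simp [trace_pauli_mul_pauli, Matrix.one_apply, hab]

lemma sum_pauliTransfer_sq {V : Op N} (hV : V ∈ unitaryGroup (QubitIdx N) ℂ)
    (b : Fin N → Fin 4) : ∑ a, pauliTransfer V b a ^ 2 = 1 := by
  have hVV : Vᴴ * V = 1 := mem_unitaryGroup_iff'.1 hV
  have hVV' : V * Vᴴ = 1 := mem_unitaryGroup_iff.1 hV
  have hcycle (a : Fin N → Fin 4) :
      (pauli b * (V * pauli a * Vᴴ)).trace = (pauli a * (Vᴴ * pauli b * V)).trace := by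
    simpa only [mul_assoc] using (Matrix.trace_mul_cycle (pauli b * V) (pauli a) Vᴴ).trans
      (Matrix.trace_mul_comm _ _)
  have hsq : Vᴴ * pauli b * V * (Vᴴ * pauli b * V) = 1 := by
    calc Vᴴ * pauli b * V * (Vᴴ * pauli b * V) = Vᴴ * (pauli b * (V * Vᴴ) * pauli b) * V := by
          simp only [mul_assoc]
      _ = 1 := by rw [hVV', mul_one, pauli_mul_self, mul_one, hVV]
  apply Complex.ofReal_injective
  push_cast
  simp only [ofReal_pauliTransfer, div_pow, ← Finset.sum_div, hcycle, sum_trace_pauli_mul_sq, hsq]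
  simp [← pow_mul, mul_comm N, ← sq]

lemma sum_pauliTransfer_pow_four {V : Op N}
    (hV : tpow 4 V * pauliFourthPower N * (tpow 4 V)ᴴ = pauliFourthPower N)
    (b : Fin N → Fin 4) : ∑ a, pauliTransfer V b a ^ 4 = 1 := by
  have hsum : ∑ a, (pauli b * (V * pauli a * Vᴴ)).trace ^ 4 =
      ∑ a, (pauli b * pauli a).trace ^ 4 := by
    simp only [← trace_tpow, tpow_mul 4 (pauli b), ← Matrix.trace_sum, ← Finset.mul_sum]
    rw [← tpow_conj_pauliFourthPower, hV, pauliFourthPower]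
  apply Complex.ofReal_injective
  push_cast
  simp only [ofReal_pauliTransfer, div_pow, ← Finset.sum_div, hsum]
  simp [trace_pauli_mul_pauli, ite_pow]

lemma pauliTransfer_mem_of_fix_pauliFourthPower {V : Op N}
    (hV : V ∈ unitaryGroup (QubitIdx N) ℂ)
    (hfix : tpow 4 V * pauliFourthPower N * (tpow 4 V)ᴴ = pauliFourthPower N)
    (b a : Fin N → Fin 4) : pauliTransfer V b a ∈ ({-1, 0, 1} : Set ℝ) :=
  mem_neg_one_zero_one_of_sum_sq_of_sum_pow_four (sum_pauliTransfer_sq hV b)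
    (sum_pauliTransfer_pow_four hfix b) a

open scoped ComplexOrder in
lemma commute_pauli_of_pauliTransfer_self_eq_one {V : Op N}
    (hV : V ∈ unitaryGroup (QubitIdx N) ℂ) {b : Fin N → Fin 4}
    (hb : pauliTransfer V b b = 1) : Commute V (pauli b) := by
  have hVV : Vᴴ * V = 1 := mem_unitaryGroup_iff'.1 hV
  have hVV' : V * Vᴴ = 1 := mem_unitaryGroup_iff.1 hV
  set Q := V * pauli b * Vᴴ with hQ
  have hQherm : Q.IsHermitian := isHermitian_mul_mul_conjTranspose V (isHermitian_pauli b)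
  have hQsq : Q * Q = 1 := by
    calc Q * Q = V * (pauli b * (Vᴴ * V) * pauli b) * Vᴴ := by simp only [hQ, mul_assoc]
      _ = 1 := by rw [hVV, mul_one, pauli_mul_self, mul_one, hVV']
  have htrace : (pauli b * Q).trace = 2 ^ N := by
    have h := ofReal_pauliTransfer V b b
    rw [hb, Complex.ofReal_one, eq_comm, div_eq_one_iff_eq (by positivity)] at h
    exact h
  -- The squared Hilbert-Schmidt norm of `Q - P` is `tr (Q - P)² = 2 * 2 ^ N - 2 * tr (P Q) = 0`.
  have hQpauli : Q = pauli b := by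
    rw [← sub_eq_zero, ← Matrix.trace_mul_conjTranspose_self_eq_zero_iff,
      Matrix.conjTranspose_sub, hQherm.eq, (isHermitian_pauli b).eq, sub_mul, mul_sub, mul_sub,
      hQsq, pauli_mul_self, Matrix.trace_sub, Matrix.trace_sub, Matrix.trace_sub,
      Matrix.trace_mul_comm Q, htrace]
    simp
  calc V * pauli b = Q * V := by rw [hQ, mul_assoc _ Vᴴ, hVV, mul_one]
    _ = pauli b * V := by rw [hQpauli]

end PauliTransfer

section SymmetricUnitaries

variable {N : ℕ}

open scoped Matrix.Norms.L2Operator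

lemma pauliTransfer_self_eq_one_of_fix_pauliFourthPower {S : StarSubalgebra ℂ (Op N)}
    (hfix : ∀ V ∈ S, V ∈ unitaryGroup (QubitIdx N) ℂ →
      tpow 4 V * pauliFourthPower N * (tpow 4 V)ᴴ = pauliFourthPower N)
    {V : Op N} (hVS : V ∈ S) (hV : V ∈ unitaryGroup (QubitIdx N) ℂ) (b : Fin N → Fin 4) :
    pauliTransfer V b b = 1 := by
  have hclosed : IsClosed (S : Set (Op N)) := S.toSubmodule.closed_of_finiteDimensional
  have : FiniteDimensional ℂ S := FiniteDimensional.finiteDimensional_submodule S.toSubmodule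
  have hmem (U : unitary S) : (U : Op N) ∈ unitaryGroup (QubitIdx N) ℂ :=
    Unitary.map_mem S.subtype U.2
  let R : unitary S → ℝ := fun U => pauliTransfer (U : Op N) b b
  have hR : ContinuousOn R Set.univ := by fun_prop
  have hmaps : Set.MapsTo R Set.univ {-1, 0, 1} := fun U _ =>
    pauliTransfer_mem_of_fix_pauliFourthPower (hmem U) (hfix _ U.1.2 (hmem U)) b b
  let W : unitary S := ⟨⟨V, hVS⟩, Subtype.ext hV.1, Subtype.ext hV.2⟩
  calc pauliTransfer V b b = R W := rfl
    _ = R 1 := isPreconnected_univ.constant_of_mapsTo (Set.toFinite _).isDiscrete hR hmaps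
        (Set.mem_univ _) (Set.mem_univ _)
    _ = 1 := by simp [R, pauliTransfer_one]

lemma smul_one_mem_unitaryGroup_iff {n : Type*} [Fintype n] [DecidableEq n] [Nonempty n] {c : ℂ} :
    c • (1 : Matrix n n ℂ) ∈ unitaryGroup n ℂ ↔ ‖c‖ = 1 := by
  refine ⟨fun h => ?_, fun h => ?_⟩
  · simpa [norm_smul] using CStarRing.norm_of_mem_unitary h
  · exact Unitary.smul_mem_of_mem (circle_coe_mem_unitary ⟨c, mem_sphere_zero_iff_norm.2 h⟩)
      (one_mem _)

variable {G : Set (Op N)}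

lemma mem_unitarySym_iff {V : Op N} : V ∈ UnitarySym N G ↔
    V ∈ unitaryGroup (QubitIdx N) ℂ ∧ V ∈ StarSubalgebra.centralizer ℂ G := by
  refine and_congr_right fun hV => ?_
  have hstar {g : Op N} (hg : Commute V g) : Commute V (star g) := by
    rw [← commute_star_comm, commute_unitary_iff_star_right_conjugate (Unitary.star_mem hV),
      star_star]
    exact (commute_unitary_iff_star_left_conjugate hV).1 hg
  rw [StarSubalgebra.mem_centralizer_iff]
  exact forall₂_congr fun g _ =>
    ⟨fun hg => ⟨hg.symm, (hstar hg).eq.symm⟩, fun hg => hg.1.symm⟩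

lemma unitarySym_eq_of_fix_pauliFourthPower
    (hfix : ∀ V ∈ UnitarySym N G,
      tpow 4 V * pauliFourthPower N * (tpow 4 V)ᴴ = pauliFourthPower N) :
    UnitarySym N G =
      {U : Op N | ∃ θ : ℝ, U = Complex.exp ((θ : ℂ) * Complex.I) • (1 : Op N)} := by
  ext V
  constructor
  · intro hV
    have hVG := (mem_unitarySym_iff.1 hV).2
    have hcomm (a : Fin N → Fin 4) : Commute V (pauli a) :=
      commute_pauli_of_pauliTransfer_self_eq_one hV.1 <|
        pauliTransfer_self_eq_one_of_fix_pauliFourthPower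
          (fun U hUG hU => hfix U (mem_unitarySym_iff.2 ⟨hU, hUG⟩)) hVG hV.1 a
    obtain ⟨c, rfl⟩ := exists_eq_smul_one_of_commute_pauli hcomm
    obtain ⟨θ, hθ⟩ := (Complex.norm_eq_one_iff c).1 (smul_one_mem_unitaryGroup_iff.1 hV.1)
    exact ⟨θ, by rw [hθ]⟩
  · rintro ⟨θ, rfl⟩
    exact ⟨smul_one_mem_unitaryGroup_iff.2 (Complex.norm_exp_ofReal_mul_I θ), by simp⟩

end SymmetricUnitaries

section Twirl

variable {N : ℕ}

open scoped Matrix.Norms.L2Operator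

instance borelSpace_op : BorelSpace (Op N) := ⟨rfl⟩

lemma continuous_tpow_conj (t : ℕ) (L : BigOp N t) :
    Continuous fun U : Op N => tpow t U * L * (tpow t U)ᴴ := by
  fun_prop

lemma integrable_tpow_conj {μ : Measure (Op N)} [IsFiniteMeasure μ]
    (hμ : ∀ᵐ U ∂μ, U ∈ unitaryGroup (QubitIdx N) ℂ) (t : ℕ) (L : BigOp N t) :
    Integrable (fun U => tpow t U * L * (tpow t U)ᴴ) μ := by
  refine Integrable.of_bound (continuous_tpow_conj t L).aestronglyMeasurable ‖L‖ ?_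
  filter_upwards [hμ] with U hU
  have hUt := tpow_mem_unitaryGroup t hU
  exact ((CStarRing.norm_mul_mem_unitary _ (Unitary.star_mem hUt)).trans
    (CStarRing.norm_mem_unitary_mul _ hUt)).le

lemma twirl_eq_integral {μ : Measure (Op N)} [IsFiniteMeasure μ]
    (hμ : ∀ᵐ U ∂μ, U ∈ unitaryGroup (QubitIdx N) ℂ) (t : ℕ) (L : BigOp N t) :
    twirl t μ L = ∫ U, tpow t U * L * (tpow t U)ᴴ ∂μ := by
  ext i j
  exact (Matrix.entryLinearMap ℂ ℂ i j).toContinuousLinearMap.integral_comp_comm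
    (integrable_tpow_conj hμ t L)

lemma tpow_conj_twirl {μ : Measure (Op N)} [IsFiniteMeasure μ]
    (hμ : ∀ᵐ U ∂μ, U ∈ unitaryGroup (QubitIdx N) ℂ) {V : Op N}
    (hV : Measure.map (fun U => V * U) μ = μ) (t : ℕ) (L : BigOp N t) :
    tpow t V * twirl t μ L * (tpow t V)ᴴ = twirl t μ L := by
  have hint := integrable_tpow_conj hμ t L
  have hshift (U : Op N) : tpow t V * (tpow t U * L * (tpow t U)ᴴ) * (tpow t V)ᴴ =
      tpow t (V * U) * L * (tpow t (V * U))ᴴ := by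
    simp only [tpow_mul, conjTranspose_mul, mul_assoc]
  calc tpow t V * twirl t μ L * (tpow t V)ᴴ
      = ∫ U, tpow t V * (tpow t U * L * (tpow t U)ᴴ) * (tpow t V)ᴴ ∂μ := by
        rw [twirl_eq_integral hμ, integral_mul_const_of_integrable (hint.const_mul _),
          integral_const_mul_of_integrable hint]
    _ = ∫ U, tpow t U * L * (tpow t U)ᴴ ∂(Measure.map (fun U => V * U) μ) := by
        simp only [hshift]
        exact (integral_map (continuous_const_mul V).aemeasurable
          (continuous_tpow_conj t L).aestronglyMeasurable).symm
    _ = twirl t μ L := by rw [hV, twirl_eq_integral hμ]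

lemma twirl_eq_of_ae_fix {μ : Measure (Op N)} [IsProbabilityMeasure μ] {t : ℕ} {L : BigOp N t}
    (h : ∀ᵐ U ∂μ, tpow t U * L * (tpow t U)ᴴ = L) : twirl t μ L = L := by
  ext i j
  have hentry : (fun U => (tpow t U * L * (tpow t U)ᴴ) i j) =ᵐ[μ] fun _ => L i j :=
    h.mono fun U hU => congrFun₂ hU i j
  simp [twirl, integral_congr_ae hentry]

lemma tpow_conj_smul_one {c : ℂ} (hc : ‖c‖ = 1) (t : ℕ) (L : BigOp N t) :
    tpow t (c • (1 : Op N)) * L * (tpow t (c • (1 : Op N)))ᴴ = L := by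
  have hct : star (c ^ t) * c ^ t = 1 := by
    simp [← mul_pow, Complex.conj_mul', hc]
  rw [tpow_smul, tpow_one, conjTranspose_smul, conjTranspose_one, mul_smul_one, smul_one_mul,
    smul_smul, hct, one_smul]

end Twirl

theorem stmt9_general {N : ℕ} (G : Set (Op N))
    (μC μU : Measure (Op N)) [IsProbabilityMeasure μC] [IsProbabilityMeasure μU]
    (hCsupp : ∀ᵐ U ∂μC, U ∈ CliffordSym N G)
    (hUsupp : ∀ᵐ U ∂μU, U ∈ UnitarySym N G)
    (hUinvL : ∀ V ∈ UnitarySym N G, Measure.map (fun U => V * U) μU = μU) :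
    (∀ L : BigOp N 4, twirl 4 μC L = twirl 4 μU L) ↔
      UnitarySym N G =
        {U : Op N | ∃ θ : ℝ, U = Complex.exp ((θ : ℂ) * Complex.I) • (1 : Op N)} := by
  constructor
  · intro hdesign
    have htwirl : twirl 4 μU (pauliFourthPower N) = pauliFourthPower N := by
      rw [← hdesign]
      exact twirl_eq_of_ae_fix (hCsupp.mono fun U hU => hU.1.tpow_conj_pauliFourthPower)
    refine unitarySym_eq_of_fix_pauliFourthPower fun V hV => ?_
    simpa only [htwirl] using
      tpow_conj_twirl (hUsupp.mono fun U hU => hU.1) (hUinvL V hV) 4 (pauliFourthPower N)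
  · intro hscalar L
    have hfix (U : Op N) (hU : U ∈ UnitarySym N G) : tpow 4 U * L * (tpow 4 U)ᴴ = L := by
      rw [hscalar] at hU
      obtain ⟨θ, rfl⟩ := hU
      exact tpow_conj_smul_one (Complex.norm_exp_ofReal_mul_I θ) 4 L
    rw [twirl_eq_of_ae_fix (hCsupp.mono fun U hU => hfix U hU.2),
      twirl_eq_of_ae_fix (hUsupp.mono hfix)]

/-- `C_{N,G}` is a `G`-symmetric unitary 4-design if and only if the only
`G`-symmetric unitaries are the scalar unitaries `e^{iθ} I`. -/
theorem stmt9 {N : ℕ} (G : Set (Op N)) (hG : IsUnitarySubgroup G)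
    (μC μU : Measure (Op N)) [IsProbabilityMeasure μC] [IsProbabilityMeasure μU]
    (hCsupp : ∀ᵐ U ∂μC, U ∈ CliffordSym N G)
    (hUsupp : ∀ᵐ U ∂μU, U ∈ UnitarySym N G)
    (hCinvL : ∀ V ∈ CliffordSym N G, Measure.map (fun U => V * U) μC = μC)
    (hCinvR : ∀ V ∈ CliffordSym N G, Measure.map (fun U => U * V) μC = μC)
    (hUinvL : ∀ V ∈ UnitarySym N G, Measure.map (fun U => V * U) μU = μU)
    (hUinvR : ∀ V ∈ UnitarySym N G, Measure.map (fun U => U * V) μU = μU) :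
    (∀ L : BigOp N 4, twirl 4 μC L = twirl 4 μU L) ↔
      UnitarySym N G =
        {U : Op N | ∃ θ : ℝ, U = Complex.exp ((θ : ℂ) * Complex.I) • (1 : Op N)} :=
  stmt9_general G μC μU hCsupp hUsupp hUinvL
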